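/- Let t ≥ 0 be a real number, let m ∈ ℂ, and let h ∈ ℂ satisfy h² = m and Re h ≥ 0. Set ρ₊ := −it + ih and ρ₋ := −it − ih (the two roots of the quadratic X ↦ (X + it)² + m), and set μ := 4t² Re m − 4t⁴ + (Im m)². Then: (i) Im ρ₋ ≤ −t ≤ Im ρ₊; (ii) the following are equivalent: ρ₋ = ρ₊; ρ₋ = ρ₊ = −it; m = 0; (iii) if moreover t > 0, then Im ρ₊ < 0 ⟺ μ < 0, Im ρ₊ = 0 ⟺ μ = 0, and Im ρ₊ > 0 ⟺ μ > 0. -/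

import Mathlib

/-- Properties of the roots `ρ± = -it ± ih` of `X ↦ (X + it)² + m`, where `h² = m`,
`Re h ≥ 0`, and `μ = 4t² Re m − 4t⁴ + (Im m)²`. -/
theorem stmt5 (t : ℝ) (ht : 0 ≤ t) (m h : ℂ) (hh : h ^ 2 = m) (hre : 0 ≤ h.re)
    (ρp ρm : ℂ)
    (hρp : ρp = -Complex.I * (t : ℂ) + Complex.I * h)
    (hρm : ρm = -Complex.I * (t : ℂ) - Complex.I * h)
    (μ : ℝ) (hμ : μ = 4 * t ^ 2 * m.re - 4 * t ^ 4 + m.im ^ 2) :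
    (ρm.im ≤ -t ∧ -t ≤ ρp.im) ∧
    ((ρm = ρp ↔ (ρm = -Complex.I * (t : ℂ) ∧ ρp = -Complex.I * (t : ℂ))) ∧
      (ρm = ρp ↔ m = 0)) ∧
    (0 < t →
      ((ρp.im < 0 ↔ μ < 0) ∧ (ρp.im = 0 ↔ μ = 0) ∧ (0 < ρp.im ↔ 0 < μ))) := by
  have hp : ρp.im = h.re - t := by
    rw [hρp]; simp; ring
  have hm : ρm.im = -t - h.re := by
    rw [hρm]; simp
  have hI := Complex.I_ne_zero
  have key : ρm = ρp ↔ h = 0 := by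
    constructor
    · intro e
      rw [hρm, hρp] at e
      have e2 : Complex.I * h = 0 := by linear_combination (-1 / 2 : ℂ) * e
      exact (mul_eq_zero.mp e2).resolve_left hI
    · intro e
      rw [hρm, hρp, e]; simp
  refine ⟨⟨by linarith, by linarith⟩, ⟨⟨fun e => ?_, fun e => e.1.trans e.2.symm⟩, ?_⟩, ?_⟩
  · have h0 := key.mp e
    rw [hρm, hρp, h0]; simp
  · rw [key, ← hh]; simp
  · intro ht0
    have hK : 0 < 4 * (t ^ 2 + h.im ^ 2) * (h.re + t) := by positivity
    have hf : μ = 4 * (t ^ 2 + h.im ^ 2) * (h.re + t) * ρp.im := by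
      rw [hμ, hp, ← hh, pow_two h, Complex.mul_re, Complex.mul_im]; ring
    rw [hf]
    refine ⟨?_, ?_, ?_⟩
    · exact ⟨fun e => mul_neg_of_pos_of_neg hK e, fun e => by by_contra hc; exact absurd (mul_nonneg hK.le (not_lt.mp hc)) (not_le.mpr e)⟩
    · rw [mul_eq_zero]; simp only [hK.ne', false_or]
    · rw [mul_pos_iff_of_pos_left hK]
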